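/- Let X ∈ ℝ^{(n1+n2)×(n1+n2−k)} be any solution of the Generalized Algebraic Riccati equation 0 = −X^T Ā K − K^T Ā^T X − 𝒬 + X^T B̄ R̄^{-1} B̄^T X. Then the square matrix 𝒴 = X K^T ∈ ℝ^{(n1+n2)×(n1+n2)} satisfies the constructed algebraic Riccati equation 0 = −𝒴^T (Ā K K^T) − (K K^T Ā^T) 𝒴 − K 𝒬 K^T + 𝒴^T B̄ R̄^{-1} B̄^T 𝒴. In particular, if P^1, P^2 are symmetric positive semidefinite solutions of the subsystem algebraic Riccati equations 0 = −P^i A^i − (A^i)^T P^i − Q^i + P^i B^i (R^i)^{-1} (B^i)^T P^i and 𝒫 is a symmetric positive semidefinite solution of the composite algebraic Riccati equation 0 = −𝒫 𝒜 − 𝒜^T 𝒫 − 𝒬 + 𝒫 ℬ R̄^{-1} ℬ^T 𝒫, then both 𝒴 = P̄ K K^T and 𝒴 = K 𝒫 K^T satisfy the constructed algebraic Riccati equation. -/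

import Mathlib

open Matrix

/-!
In `-XᵀF - FᵀX - Q + XᵀSX`, replacing `(F, Q, X)` by `(FL, LᵀQL, XL)` is a congruence by `L`.
With `L = Kᵀ` this carries the generalized equation (`F = ĀK`) to the constructed one
(`F = ĀKKᵀ`). With `L = K` it carries the block-diagonal equation satisfied by the symmetric
matrix `P̄` to the generalized equation for `X = P̄K`. The composite equation for `𝒫` is the
generalized equation for `X = K𝒫`, since `K` can be absorbed into the coefficients.
-/

section RiccatiResidual

variable {α n n₁ n₂ m m₁ m₂ p p₁ p₂ q : Type*} [CommRing α] [Fintype n]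

/-- The residual of an algebraic Riccati equation with rectangular unknown `X`. The product `ĀK`
is encoded by the single coefficient `F` and `B̄R̄⁻¹B̄ᵀ` by `S`; for `X` square and symmetric this
is the residual of the ordinary algebraic Riccati equation with drift `F`. -/
def riccatiResidual (F : Matrix n p α) (S : Matrix n n α) (Q : Matrix p p α)
    (X : Matrix n p α) : Matrix p p α :=
  -(Xᵀ * F) - Fᵀ * X - Q + Xᵀ * S * X

theorem riccatiResidual_mul_right [Fintype p] (F : Matrix n p α) (S : Matrix n n α)
    (Q : Matrix p p α) (X : Matrix n p α) (L : Matrix p q α) :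
    riccatiResidual (F * L) S (Lᵀ * Q * L) (X * L) = Lᵀ * riccatiResidual F S Q X * L := by
  simp only [riccatiResidual, transpose_mul, Matrix.mul_add, Matrix.mul_sub, Matrix.mul_neg,
    Matrix.add_mul, Matrix.sub_mul, Matrix.neg_mul, Matrix.mul_assoc]

theorem riccatiResidual_mul_right_eq_zero [Fintype p] {F : Matrix n p α} {S : Matrix n n α}
    {Q : Matrix p p α} {X : Matrix n p α} (h : riccatiResidual F S Q X = 0) (L : Matrix p q α) :
    riccatiResidual (F * L) S (Lᵀ * Q * L) (X * L) = 0 := by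
  rw [riccatiResidual_mul_right, h, Matrix.mul_zero, Matrix.zero_mul]

theorem riccatiResidual_mul_left [Fintype q] (F : Matrix n p α) (S : Matrix n n α)
    (Q : Matrix p p α) (M : Matrix n q α) (X : Matrix q p α) :
    riccatiResidual F S Q (M * X) = riccatiResidual (Mᵀ * F) (Mᵀ * S * M) Q X := by
  simp only [riccatiResidual, transpose_mul, transpose_transpose, Matrix.mul_assoc]

theorem riccatiResidual_fromBlocks_diagonal [Fintype n₁] [Fintype n₂]
    (F₁ : Matrix n₁ p₁ α) (S₁ : Matrix n₁ n₁ α) (Q₁ : Matrix p₁ p₁ α) (X₁ : Matrix n₁ p₁ α)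
    (F₂ : Matrix n₂ p₂ α) (S₂ : Matrix n₂ n₂ α) (Q₂ : Matrix p₂ p₂ α) (X₂ : Matrix n₂ p₂ α) :
    riccatiResidual (fromBlocks F₁ 0 0 F₂) (fromBlocks S₁ 0 0 S₂) (fromBlocks Q₁ 0 0 Q₂)
        (fromBlocks X₁ 0 0 X₂) =
      fromBlocks (riccatiResidual F₁ S₁ Q₁ X₁) 0 0 (riccatiResidual F₂ S₂ Q₂ X₂) := by
  simp [riccatiResidual, fromBlocks_transpose, fromBlocks_multiply, fromBlocks_neg,
    fromBlocks_add, sub_eq_add_neg]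

theorem riccatiResidual_of_isSymm {P : Matrix n n α} (hP : P.IsSymm) (A S Q : Matrix n n α) :
    riccatiResidual A S Q P = -(P * A) - Aᵀ * P - Q + P * S * P := by
  rw [riccatiResidual, hP.eq]

theorem constructed_riccati_of_riccatiResidual_eq_zero [Fintype m] [Fintype p]
    {A : Matrix n n α} {B : Matrix n m α} {W : Matrix m m α} {K X : Matrix n p α}
    {Q : Matrix p p α} (h : riccatiResidual (A * K) (B * W * Bᵀ) Q X = 0) :
    0 = -((X * Kᵀ)ᵀ * (A * K * Kᵀ)) - (K * Kᵀ * Aᵀ) * (X * Kᵀ)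
      - K * Q * Kᵀ + (X * Kᵀ)ᵀ * B * W * Bᵀ * (X * Kᵀ) := by
  simpa only [riccatiResidual, transpose_mul, transpose_transpose, Matrix.mul_assoc] using
    (riccatiResidual_mul_right_eq_zero h Kᵀ).symm

theorem mul_inv_mul_transpose_fromBlocks_diagonal [Fintype m₁] [Fintype m₂]
    [DecidableEq m₁] [DecidableEq m₂]
    (B₁ : Matrix n₁ m₁ α) (B₂ : Matrix n₂ m₂ α) {R₁ : Matrix m₁ m₁ α} {R₂ : Matrix m₂ m₂ α}
    (hR : IsUnit R₁ ↔ IsUnit R₂) :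
    fromBlocks B₁ 0 0 B₂ * (fromBlocks R₁ 0 0 R₂)⁻¹ * (fromBlocks B₁ 0 0 B₂)ᵀ =
      fromBlocks (B₁ * R₁⁻¹ * B₁ᵀ) 0 0 (B₂ * R₂⁻¹ * B₂ᵀ) := by
  simp [inv_fromBlocks_zero₁₂_of_isUnit_iff R₁ 0 R₂ hR, fromBlocks_transpose, fromBlocks_multiply]

end RiccatiResidual

theorem isSymm_of_posSemidef {n R : Type*} [Ring R] [PartialOrder R] [StarRing R] [TrivialStar R]
    {A : Matrix n n R} (hA : A.PosSemidef) : A.IsSymm :=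
  isHermitian_iff_isSymm.mp hA.isHermitian

theorem constructed_riccati_solutions_general {α n₁ n₂ m₁ m₂ p : Type*} [CommRing α]
    [Fintype n₁] [Fintype n₂] [Fintype m₁] [Fintype m₂] [Fintype p]
    [DecidableEq m₁] [DecidableEq m₂]
    {A₁ : Matrix n₁ n₁ α} {A₂ : Matrix n₂ n₂ α} {B₁ : Matrix n₁ m₁ α} {B₂ : Matrix n₂ m₂ α}
    {K : Matrix (n₁ ⊕ n₂) p α} {Q₁ : Matrix n₁ n₁ α} {Q₂ : Matrix n₂ n₂ α}
    {R₁ : Matrix m₁ m₁ α} {R₂ : Matrix m₂ m₂ α} (hR₁ : IsUnit R₁) (hR₂ : IsUnit R₂)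
    {P₁ : Matrix n₁ n₁ α} {P₂ : Matrix n₂ n₂ α}
    {Abar : Matrix (n₁ ⊕ n₂) (n₁ ⊕ n₂) α} (hA : Abar = fromBlocks A₁ 0 0 A₂)
    {Bbar : Matrix (n₁ ⊕ n₂) (m₁ ⊕ m₂) α} (hB : Bbar = fromBlocks B₁ 0 0 B₂)
    {Rbar : Matrix (m₁ ⊕ m₂) (m₁ ⊕ m₂) α} (hR : Rbar = fromBlocks R₁ 0 0 R₂)
    {Acal : Matrix p p α} (hAcal : Acal = Kᵀ * Abar * K)
    {Bcal : Matrix p (m₁ ⊕ m₂) α} (hBcal : Bcal = Kᵀ * Bbar)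
    {Qcal : Matrix p p α} (hQcal : Qcal = Kᵀ * fromBlocks Q₁ 0 0 Q₂ * K)
    {Pbar : Matrix (n₁ ⊕ n₂) (n₁ ⊕ n₂) α} (hP : Pbar = fromBlocks P₁ 0 0 P₂)
    {Pcal : Matrix p p α} :
    (∀ X : Matrix (n₁ ⊕ n₂) p α,
      0 = -(Xᵀ * Abar * K) - Kᵀ * Abarᵀ * X - Qcal + Xᵀ * Bbar * Rbar⁻¹ * Bbarᵀ * X →
      0 = -((X * Kᵀ)ᵀ * (Abar * K * Kᵀ)) - (K * Kᵀ * Abarᵀ) * (X * Kᵀ)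
          - K * Qcal * Kᵀ + (X * Kᵀ)ᵀ * Bbar * Rbar⁻¹ * Bbarᵀ * (X * Kᵀ)) ∧
    (P₁.IsSymm ∧ P₂.IsSymm ∧
      0 = -(P₁ * A₁) - A₁ᵀ * P₁ - Q₁ + P₁ * B₁ * R₁⁻¹ * B₁ᵀ * P₁ ∧
      0 = -(P₂ * A₂) - A₂ᵀ * P₂ - Q₂ + P₂ * B₂ * R₂⁻¹ * B₂ᵀ * P₂ →
      0 = -((Pbar * K * Kᵀ)ᵀ * (Abar * K * Kᵀ)) - (K * Kᵀ * Abarᵀ) * (Pbar * K * Kᵀ)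
          - K * Qcal * Kᵀ + (Pbar * K * Kᵀ)ᵀ * Bbar * Rbar⁻¹ * Bbarᵀ * (Pbar * K * Kᵀ)) ∧
    (Pcal.IsSymm ∧
      0 = -(Pcal * Acal) - Acalᵀ * Pcal - Qcal + Pcal * Bcal * Rbar⁻¹ * Bcalᵀ * Pcal →
      0 = -((K * Pcal * Kᵀ)ᵀ * (Abar * K * Kᵀ)) - (K * Kᵀ * Abarᵀ) * (K * Pcal * Kᵀ)
          - K * Qcal * Kᵀ + (K * Pcal * Kᵀ)ᵀ * Bbar * Rbar⁻¹ * Bbarᵀ * (K * Pcal * Kᵀ)) := by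
  refine ⟨fun X h => constructed_riccati_of_riccatiResidual_eq_zero ?_, ?_, ?_⟩
  · simpa only [riccatiResidual, transpose_mul, Matrix.mul_assoc] using h.symm
  · rintro ⟨hP₁, hP₂, h₁, h₂⟩
    have hblock : riccatiResidual Abar (Bbar * Rbar⁻¹ * Bbarᵀ)
        (fromBlocks Q₁ 0 0 Q₂) Pbar = 0 := by
      simp only [hA, hB, hR, hP, mul_inv_mul_transpose_fromBlocks_diagonal B₁ B₂
        (iff_of_true hR₁ hR₂), riccatiResidual_fromBlocks_diagonal,
        riccatiResidual_of_isSymm hP₁, riccatiResidual_of_isSymm hP₂, ← Matrix.mul_assoc,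
        ← h₁, ← h₂, fromBlocks_zero]
    rw [hQcal]
    exact constructed_riccati_of_riccatiResidual_eq_zero
      (riccatiResidual_mul_right_eq_zero hblock K)
  · rintro ⟨hPcal, h⟩
    refine constructed_riccati_of_riccatiResidual_eq_zero ?_
    rw [riccatiResidual_mul_left, riccatiResidual_of_isSymm hPcal]
    simpa only [hAcal, hBcal, transpose_mul, transpose_transpose, Matrix.mul_assoc] using h.symm

/-- If `X` solves the Generalized Algebraic Riccati equation, then
`𝒴 = X Kᵀ` solves the constructed algebraic Riccati equation
`0 = −𝒴ᵀ (Ā K Kᵀ) − (K Kᵀ Āᵀ) 𝒴 − K 𝒬 Kᵀ + 𝒴ᵀ B̄ R̄⁻¹ B̄ᵀ 𝒴`; in particular, both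
`𝒴 = P̄ K Kᵀ` and `𝒴 = K 𝒫 Kᵀ` satisfy it when `P¹, P²` solve the subsystem Riccati
equations and `𝒫` solves the composite Riccati equation. -/
theorem constructed_riccati_solutions
    (n1 n2 m1 m2 k : ℕ) (hk : k ≤ min n1 n2)
    (A1 : Matrix (Fin n1) (Fin n1) ℝ) (A2 : Matrix (Fin n2) (Fin n2) ℝ)
    (B1 : Matrix (Fin n1) (Fin m1) ℝ) (B2 : Matrix (Fin n2) (Fin m2) ℝ)
    (K : Matrix (Fin n1 ⊕ Fin n2) (Fin (n1 + n2 - k)) ℝ)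
    (Q1 : Matrix (Fin n1) (Fin n1) ℝ) (Q2 : Matrix (Fin n2) (Fin n2) ℝ)
    (R1 : Matrix (Fin m1) (Fin m1) ℝ) (R2 : Matrix (Fin m2) (Fin m2) ℝ)
    (hQ1 : Q1.PosSemidef) (hQ2 : Q2.PosSemidef)
    (hR1 : R1.PosDef) (hR2 : R2.PosDef)
    (P1 : Matrix (Fin n1) (Fin n1) ℝ) (P2 : Matrix (Fin n2) (Fin n2) ℝ)
    (Abar : Matrix (Fin n1 ⊕ Fin n2) (Fin n1 ⊕ Fin n2) ℝ)
    (hA : Abar = Matrix.fromBlocks A1 0 0 A2)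
    (Bbar : Matrix (Fin n1 ⊕ Fin n2) (Fin m1 ⊕ Fin m2) ℝ)
    (hB : Bbar = Matrix.fromBlocks B1 0 0 B2)
    (Rbar : Matrix (Fin m1 ⊕ Fin m2) (Fin m1 ⊕ Fin m2) ℝ)
    (hR : Rbar = Matrix.fromBlocks R1 0 0 R2)
    (Acal : Matrix (Fin (n1 + n2 - k)) (Fin (n1 + n2 - k)) ℝ)
    (hAcal : Acal = Kᵀ * Abar * K)
    (Bcal : Matrix (Fin (n1 + n2 - k)) (Fin m1 ⊕ Fin m2) ℝ)
    (hBcal : Bcal = Kᵀ * Bbar)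
    (Qcal : Matrix (Fin (n1 + n2 - k)) (Fin (n1 + n2 - k)) ℝ)
    (hQcal : Qcal = Kᵀ * (Matrix.fromBlocks Q1 0 0 Q2) * K)
    (Pbar : Matrix (Fin n1 ⊕ Fin n2) (Fin n1 ⊕ Fin n2) ℝ)
    (hP : Pbar = Matrix.fromBlocks P1 0 0 P2)
    (Pcal : Matrix (Fin (n1 + n2 - k)) (Fin (n1 + n2 - k)) ℝ) :
    (∀ X : Matrix (Fin n1 ⊕ Fin n2) (Fin (n1 + n2 - k)) ℝ,
      ((0 : Matrix (Fin (n1 + n2 - k)) (Fin (n1 + n2 - k)) ℝ)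
        = -(Xᵀ * Abar * K) - Kᵀ * Abarᵀ * X - Qcal + Xᵀ * Bbar * Rbar⁻¹ * Bbarᵀ * X) →
      ((0 : Matrix (Fin n1 ⊕ Fin n2) (Fin n1 ⊕ Fin n2) ℝ)
        = -((X * Kᵀ)ᵀ * (Abar * K * Kᵀ)) - (K * Kᵀ * Abarᵀ) * (X * Kᵀ)
          - K * Qcal * Kᵀ + (X * Kᵀ)ᵀ * Bbar * Rbar⁻¹ * Bbarᵀ * (X * Kᵀ))) ∧
    ((P1.PosSemidef ∧ P2.PosSemidef ∧
      ((0 : Matrix (Fin n1) (Fin n1) ℝ)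
        = -(P1 * A1) - A1ᵀ * P1 - Q1 + P1 * B1 * R1⁻¹ * B1ᵀ * P1) ∧
      ((0 : Matrix (Fin n2) (Fin n2) ℝ)
        = -(P2 * A2) - A2ᵀ * P2 - Q2 + P2 * B2 * R2⁻¹ * B2ᵀ * P2)) →
      ((0 : Matrix (Fin n1 ⊕ Fin n2) (Fin n1 ⊕ Fin n2) ℝ)
        = -((Pbar * K * Kᵀ)ᵀ * (Abar * K * Kᵀ)) - (K * Kᵀ * Abarᵀ) * (Pbar * K * Kᵀ)
          - K * Qcal * Kᵀ
          + (Pbar * K * Kᵀ)ᵀ * Bbar * Rbar⁻¹ * Bbarᵀ * (Pbar * K * Kᵀ))) ∧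
    ((Pcal.PosSemidef ∧
      ((0 : Matrix (Fin (n1 + n2 - k)) (Fin (n1 + n2 - k)) ℝ)
        = -(Pcal * Acal) - Acalᵀ * Pcal - Qcal
          + Pcal * Bcal * Rbar⁻¹ * Bcalᵀ * Pcal)) →
      ((0 : Matrix (Fin n1 ⊕ Fin n2) (Fin n1 ⊕ Fin n2) ℝ)
        = -((K * Pcal * Kᵀ)ᵀ * (Abar * K * Kᵀ)) - (K * Kᵀ * Abarᵀ) * (K * Pcal * Kᵀ)
          - K * Qcal * Kᵀ
          + (K * Pcal * Kᵀ)ᵀ * Bbar * Rbar⁻¹ * Bbarᵀ * (K * Pcal * Kᵀ))) := by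
  have ⟨generalized, subsystems, composite⟩ := constructed_riccati_solutions_general
    hR1.isUnit hR2.isUnit hA hB hR hAcal hBcal hQcal hP (Pcal := Pcal)
  exact ⟨generalized,
    fun h => subsystems (h.imp isSymm_of_posSemidef (·.imp_left isSymm_of_posSemidef)),
    fun h => composite (h.imp_left isSymm_of_posSemidef)⟩
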